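/- arXiv:0709.4485 — 4 statements merged into one kernel-verified Lean document; each statement's English description precedes it below -/
import Mathlib

section
/- Riemann-Roch theorem for graphs: Let G be a finite connected loopless multigraph of genus g = |E| − |V| + 1 and let K_G be its canonical divisor, K_G(v) = deg(v) − 2. Then for every divisor D on G, r(D) − r(K_G − D) = deg(D) + 1 − g. -/
/-!
The proof is a variant of Baker and Norine's. Every total order `p` on the vertices gives a
divisor `ν_p(v) = #{edges from v to smaller vertices} - 1` (`orderDiv`), with three properties.

* Reversing the order gives `ν_p + ν_{-p} = K`, and hence `deg ν_p = g - 1`.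
* `ν_p` is not equivalent to an effective divisor (`not_linNE_orderDiv`).
* If `D` is not equivalent to an effective divisor, then some `ν_p - D` is
  (`exists_orderDiv_sub`). Indeed `D` is equivalent to a `q`-reduced divisor `D'`, which is
  negative at `q`, and Dhar's burning algorithm run from `q` yields an order with `D' ≤ ν_p`.

Let `E ≥ 0` with `|D - E| = ∅`, and let `F ≥ 0` be equivalent to `ν_p - (D - E)`. Then
`K - D - F` is equivalent to `ν_{-p} - E`, so `|K - D - F| = ∅`, and
`deg F = deg E - deg D + g - 1`. Therefore `r(K - D) ≤ r(D) - deg D + g - 1`; exchanging `D` and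
`K - D` gives the opposite inequality.

For the existence of `q`-reduced divisors, connectivity supplies a function `u ≥ 0` whose
Laplacian is at least `1` away from `q` (`exists_potential`). Adding a multiple of the Laplacian of
`u` makes any divisor nonnegative away from `q`, and `∑ v, u v * D' v` strictly decreases whenever
a set avoiding `q` fires, so a minimizer of this sum is `q`-reduced.
-/

open scoped Classical

noncomputable section

/-- A divisor `D'` is equivalent to `D` if `D - D'` is the principal divisor of some
integer-valued function `f` on the vertices. -/
def GEquiv {V : Type} [Fintype V] (m : V → V → ℕ) (D D' : V → ℤ) : Prop :=
  ∃ f : V → ℤ, ∀ v, D v - D' v = ∑ w, (m v w : ℤ) * (f v - f w)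

/-- A divisor is effective if it is nonnegative everywhere. -/
def GEff {V : Type} (D : V → ℤ) : Prop := ∀ v, 0 ≤ D v

/-- `|D| ≠ ∅`: some effective divisor is equivalent to `D`. -/
def GLinNE {V : Type} [Fintype V] (m : V → V → ℕ) (D : V → ℤ) : Prop :=
  ∃ E : V → ℤ, GEff E ∧ GEquiv m E D

/-- The set of numbers `deg E - 1` over effective divisors `E` with `|D - E| = ∅`;
the rank of `D` is the least element of this set. -/
def GRankSet {V : Type} [Fintype V] (m : V → V → ℕ) (D : V → ℤ) : Set ℤ :=
  {n | ∃ E : V → ℤ, GEff E ∧ ¬ GLinNE m (fun v => D v - E v) ∧ n = (∑ v, E v) - 1}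

/-! ### The Laplacian and order divisors -/

/-- The principal divisor of `f`. -/
def lap {V : Type} [Fintype V] (m : V → V → ℕ) (f : V → ℤ) (v : V) : ℤ :=
  ∑ w, (m v w : ℤ) * (f v - f w)

/-- The divisor `ν_p` of an order on the vertices. The order is encoded by a height function `p`,
which is total when `p` is injective; the reversed order is that of `-p`. -/
def orderDiv {V : Type} [Fintype V] (m : V → V → ℕ) (p : V → ℤ) (v : V) : ℤ :=
  (∑ w, if p w < p v then (m v w : ℤ) else 0) - 1

lemma lap_add {V : Type} [Fintype V] (m : V → V → ℕ) (f h : V → ℤ) (v : V) :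
    lap m (fun v => f v + h v) v = lap m f v + lap m h v := by
  unfold lap
  rw [← Finset.sum_add_distrib]
  exact Finset.sum_congr rfl fun w _ => by ring

lemma lap_const_mul {V : Type} [Fintype V] (m : V → V → ℕ) (c : ℤ) (f : V → ℤ) (v : V) :
    lap m (fun v => c * f v) v = c * lap m f v := by
  unfold lap
  rw [Finset.mul_sum]
  exact Finset.sum_congr rfl fun w _ => by ring

lemma lap_symm {V : Type} [Fintype V] (m : V → V → ℕ) (hsymm : ∀ v w, m v w = m w v)
    (f h : V → ℤ) : ∑ v, f v * lap m h v = ∑ v, h v * lap m f v := by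
  have key : ∑ v, ∑ w, (m v w : ℤ) * f v * h w = ∑ v, ∑ w, (m v w : ℤ) * h v * f w := by
    rw [Finset.sum_comm]
    refine Finset.sum_congr rfl fun v _ => Finset.sum_congr rfl fun w _ => ?_
    rw [hsymm w v]; ring
  have e : ∀ a b : V → ℤ, ∑ v, a v * lap m b v =
      ∑ v, ∑ w, (m v w : ℤ) * a v * b v - ∑ v, ∑ w, (m v w : ℤ) * a v * b w := by
    intro a b
    unfold lap
    rw [← Finset.sum_sub_distrib]
    refine Finset.sum_congr rfl fun v _ => ?_
    rw [Finset.mul_sum, ← Finset.sum_sub_distrib]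
    exact Finset.sum_congr rfl fun w _ => by ring
  rw [e, e, key]
  congr 1
  exact Finset.sum_congr rfl fun v _ => Finset.sum_congr rfl fun w _ => by ring

lemma sum_lap {V : Type} [Fintype V] (m : V → V → ℕ) (hsymm : ∀ v w, m v w = m w v)
    (f : V → ℤ) : ∑ v, lap m f v = 0 := by
  have h := lap_symm m hsymm (fun _ => 1) f
  simpa [lap] using h

/-- At a vertex that is `p`-minimal among the minimizers of `f`, the divisor `ν_p + lap f` is
negative. -/
lemma not_linNE_orderDiv {V : Type} [Fintype V] [Nonempty V] (m : V → V → ℕ) (p : V → ℤ) :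
    ¬ GLinNE m (orderDiv m p) := by
  rintro ⟨E, hE, f, hf⟩
  obtain ⟨a, ha⟩ := Finite.exists_min f
  obtain ⟨b, hb, hbp⟩ := Finset.exists_min_image (Finset.univ.filter fun v => f v = f a) p
    ⟨a, by simp⟩
  simp only [Finset.mem_filter, Finset.mem_univ, true_and] at hb hbp
  have h1 := hf b
  have h2 := hE b
  have h3 : (∑ w, if p w < p b then (m b w : ℤ) else 0) + ∑ w, (m b w : ℤ) * (f b - f w) ≤ 0 := by
    rw [← Finset.sum_add_distrib]
    refine Finset.sum_nonpos fun w _ => ?_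
    have hw := ha w
    have hm : (0 : ℤ) ≤ m b w := by positivity
    split_ifs with h
    · have : f w ≠ f a := fun h' => absurd (hbp w h') (by omega)
      have : f b - f w ≤ -1 := by omega
      nlinarith
    · have : f b - f w ≤ 0 := by omega
      nlinarith
  unfold orderDiv at h1
  linarith

lemma orderDiv_add_neg {V : Type} [Fintype V] (m : V → V → ℕ) (hloopless : ∀ v, m v v = 0)
    (p : V → ℤ) (hp : Function.Injective p) (v : V) :
    orderDiv m p v + orderDiv m (fun w => - p w) v = (∑ w, (m v w : ℤ)) - 2 := by
  have : (∑ w, if p w < p v then (m v w : ℤ) else 0) +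
      (∑ w, if - p w < - p v then (m v w : ℤ) else 0) = ∑ w, (m v w : ℤ) := by
    rw [← Finset.sum_add_distrib]
    refine Finset.sum_congr rfl fun w _ => ?_
    rcases lt_trichotomy (p w) (p v) with h | h | h
    · simp [h, h.le]
    · rw [hp h]; simp [hloopless]
    · simp [h, h.le]
  unfold orderDiv
  linarith

lemma sum_orderDiv {V : Type} [Fintype V] (m : V → V → ℕ) (hsymm : ∀ v w, m v w = m w v)
    (hloopless : ∀ v, m v v = 0) (p : V → ℤ) (hp : Function.Injective p) :
    2 * ∑ v, orderDiv m p v = (∑ v, ∑ w, (m v w : ℤ)) - 2 * Fintype.card V := by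
  have h1 : ∑ v, orderDiv m p v = ∑ v, orderDiv m (fun w => - p w) v := by
    unfold orderDiv
    rw [Finset.sum_sub_distrib, Finset.sum_sub_distrib, Finset.sum_comm]
    congr 1
    refine Finset.sum_congr rfl fun v _ => Finset.sum_congr rfl fun w _ => ?_
    rw [hsymm w v]; simp
  have h2 : ∑ v, (orderDiv m p v + orderDiv m (fun w => - p w) v) =
      ∑ v, ((∑ w, (m v w : ℤ)) - 2) :=
    Finset.sum_congr rfl fun v _ => orderDiv_add_neg m hloopless p hp v
  rw [Finset.sum_add_distrib, ← h1, Finset.sum_sub_distrib] at h2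
  simp at h2
  linarith

/-! ### Reduced divisors -/

/-- A height function peaking at `q`, for which every other vertex has a strictly higher neighbour.
It is a constant minus the distance to `q`. -/
lemma exists_height {V : Type} [Fintype V] (m : V → V → ℕ)
    (hsymm : ∀ v w, m v w = m w v) (hloopless : ∀ v, m v v = 0)
    (hconn : ∀ v w : V, Relation.ReflTransGen (fun a b => 0 < m a b) v w) (q : V) :
    ∃ e : V → ℕ, (∀ v, e v ≤ e q) ∧ ∀ v, v ≠ q → ∃ w, 0 < m v w ∧ e v < e w := by
  let G : SimpleGraph V :=
    { Adj := fun a b => 0 < m a b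
      symm := ⟨fun a b h => by rw [hsymm]; exact h⟩
      loopless := ⟨fun a h => by simp [hloopless] at h⟩ }
  have hreach : ∀ v, G.Reachable v q := fun v =>
    (SimpleGraph.reachable_iff_reflTransGen v q).2 (hconn v q)
  let N := ∑ v, G.dist v q
  have hN : ∀ v, G.dist v q ≤ N := fun v =>
    Finset.single_le_sum (f := fun v => G.dist v q) (fun _ _ => Nat.zero_le _) (Finset.mem_univ v)
  refine ⟨fun v => N - G.dist v q, fun v => by simp, fun v hv => ?_⟩
  obtain ⟨W, hW⟩ := (hreach v).exists_walk_length_eq_dist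
  cases W with
  | nil => exact absurd rfl hv
  | @cons _ w _ h W =>
    refine ⟨w, h, ?_⟩
    have h1 := SimpleGraph.dist_le W
    have h2 := hN v
    rw [SimpleGraph.Walk.length_cons] at hW
    change N - _ < N - _
    omega

lemma exists_potential {V : Type} [Fintype V] (m : V → V → ℕ)
    (hsymm : ∀ v w, m v w = m w v) (hloopless : ∀ v, m v v = 0)
    (hconn : ∀ v w : V, Relation.ReflTransGen (fun a b => 0 < m a b) v w) (q : V) :
    ∃ u : V → ℤ, (∀ v, 0 ≤ u v) ∧ u q = 0 ∧ ∀ v, v ≠ q → 1 ≤ lap m u v := by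
  obtain ⟨e, he, hnb⟩ := exists_height m hsymm hloopless hconn q
  -- The base exceeds every degree, so the single higher neighbour outweighs all other terms.
  let C : ℤ := (∑ v, ∑ w, (m v w : ℤ)) + 1
  have hC : 1 ≤ C := by
    have : (0 : ℤ) ≤ ∑ v, ∑ w, (m v w : ℤ) := by positivity
    simp only [C]; omega
  refine ⟨fun v => C ^ e q - C ^ e v, fun v => ?_, by simp, fun v hv => ?_⟩
  · have := pow_le_pow_right₀ hC (he v)
    simpa using this
  · obtain ⟨w₀, hw₀, hlt⟩ := hnb v hv
    have hdeg : ∑ w, (m v w : ℤ) ≤ C - 1 := by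
      have := Finset.single_le_sum (f := fun v => ∑ w, (m v w : ℤ))
        (fun _ _ => by positivity) (Finset.mem_univ v)
      simpa [C] using this
    have hpos : 1 ≤ C ^ e v := one_le_pow₀ hC
    have h1 : C ^ e v * C ≤ C ^ e w₀ := by
      rw [← pow_succ]; exact pow_le_pow_right₀ hC hlt
    have h2 : C ^ e w₀ ≤ ∑ w, (m v w : ℤ) * C ^ e w := by
      have h3 := Finset.single_le_sum (f := fun w => (m v w : ℤ) * C ^ e w)
        (fun _ _ => by positivity) (Finset.mem_univ w₀)
      have h4 : (1 : ℤ) ≤ m v w₀ := by exact_mod_cast hw₀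
      have h5 : (0 : ℤ) ≤ C ^ e w₀ := by positivity
      beta_reduce at h3
      nlinarith
    have h3 : lap m (fun v => C ^ e q - C ^ e v) v =
        (∑ w, (m v w : ℤ) * C ^ e w) - (∑ w, (m v w : ℤ)) * C ^ e v := by
      unfold lap
      rw [Finset.sum_mul, ← Finset.sum_sub_distrib]
      exact Finset.sum_congr rfl fun w _ => by ring
    rw [h3]
    nlinarith

/-- Every divisor is equivalent to a `q`-reduced one: nonnegative away from `q`, while firing any
nonempty set that avoids `q` drives one of its vertices negative. -/
lemma exists_reduced {V : Type} [Fintype V] (m : V → V → ℕ)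
    (hsymm : ∀ v w, m v w = m w v) (hloopless : ∀ v, m v v = 0)
    (hconn : ∀ v w : V, Relation.ReflTransGen (fun a b => 0 < m a b) v w) (q : V) (D : V → ℤ) :
    ∃ f : V → ℤ, (∀ v, v ≠ q → 0 ≤ D v + lap m f v) ∧
      ∀ A : Finset V, A.Nonempty → q ∉ A →
        ∃ v ∈ A, D v + lap m f v < ∑ w, if w ∈ A then 0 else (m v w : ℤ) := by
  obtain ⟨u, hu0, huq, hu⟩ := exists_potential m hsymm hloopless hconn q
  let S : Set (V → ℤ) := {f | ∀ v, v ≠ q → 0 ≤ D v + lap m f v}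
  have hS : S.Nonempty := by
    refine ⟨fun v => (∑ x, |D x|) * u v, fun v hv => ?_⟩
    rw [lap_const_mul]
    have h1 := Finset.single_le_sum (f := fun x => |D x|) (fun _ _ => abs_nonneg _)
      (Finset.mem_univ v)
    beta_reduce at h1
    have h2 := neg_abs_le (D v)
    have h3 := hu v hv
    have h4 := abs_nonneg (D v)
    nlinarith
  let Φ : (V → ℤ) → ℤ := fun f => ∑ v, u v * (D v + lap m f v)
  have hΦ : ∀ f ∈ S, 0 ≤ Φ f := by
    intro f hf
    refine Finset.sum_nonneg fun v _ => ?_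
    by_cases hv : v = q
    · simp [hv, huq]
    · exact mul_nonneg (hu0 v) (hf v hv)
  -- `Φ` is nonnegative on `S`, so minimizing `(Φ f).toNat` there minimizes `Φ` itself.
  obtain ⟨f, hfS, hmin⟩ := (measure fun f => (Φ f).toNat).wf.has_min S hS
  refine ⟨f, hfS, fun A hA hqA => ?_⟩
  by_contra! hcon
  let h : V → ℤ := fun v => if v ∈ A then -1 else 0
  have hin : ∀ v ∈ A, lap m h v = - ∑ w, if w ∈ A then 0 else (m v w : ℤ) := by
    intro v hv
    unfold lap
    rw [← Finset.sum_neg_distrib]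
    refine Finset.sum_congr rfl fun w _ => ?_
    by_cases hw : w ∈ A <;> simp [h, hv, hw]
  have hout : ∀ v, v ∉ A → 0 ≤ lap m h v := by
    intro v hv
    refine Finset.sum_nonneg fun w _ => ?_
    by_cases hw : w ∈ A <;> simp [h, hv, hw]
  have hS' : (fun v => f v + h v) ∈ S := by
    intro v hvq
    rw [lap_add]
    by_cases hv : v ∈ A
    · have := hcon v hv
      rw [hin v hv]; linarith
    · have := hout v hv
      have := hfS v hvq
      linarith
  have hlt : Φ (fun v => f v + h v) < Φ f := by
    have e1 : Φ (fun v => f v + h v) = Φ f + ∑ v, u v * lap m h v := by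
      simp only [Φ]
      rw [← Finset.sum_add_distrib]
      exact Finset.sum_congr rfl fun v _ => by rw [lap_add]; ring
    have e2 : ∑ v, h v * lap m u v < 0 := by
      obtain ⟨a, ha⟩ := hA
      have hq : ∀ v ∈ A, v ≠ q := fun v hv h' => hqA (h' ▸ hv)
      refine Finset.sum_neg' (fun v _ => ?_) ⟨a, Finset.mem_univ a, ?_⟩
      · by_cases hv : v ∈ A
        · have := hu v (hq v hv)
          simp [h, hv]; linarith
        · simp [h, hv]
      · have := hu a (hq a ha)
        simp [h, ha]; linarith
    rw [e1, lap_symm m hsymm]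
    linarith
  have h1 := hΦ _ hS'
  have h2 := hmin _ hS'
  simp only [InvImage, WellFoundedRelation.rel] at h2
  apply h2
  exact (Int.toNat_lt_toNat (by omega)).2 hlt

/-! ### Burning orders -/

/-- Dhar's burning algorithm: after `k + 1` steps the burnt set `B` is ordered by the time at which
its vertices burn, and the divisor is bounded on `B` by the order divisor. -/
lemma exists_burning_order {V : Type} [Fintype V] (m : V → V → ℕ) (q : V) (D : V → ℤ)
    (hq : D q < 0)
    (hD : ∀ A : Finset V, A.Nonempty → q ∉ A →
        ∃ v ∈ A, D v < ∑ w, if w ∈ A then 0 else (m v w : ℤ)) :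
    ∀ k : ℕ, k + 1 ≤ Fintype.card V → ∃ (B : Finset V) (p : V → ℤ), B.card = k + 1 ∧ q ∈ B ∧
      Set.InjOn p B ∧ (∀ v ∈ B, p v < k + 1) ∧
      ∀ v ∈ B, D v ≤ (∑ w, if w ∈ B ∧ p w < p v then (m v w : ℤ) else 0) - 1 := by
  intro k
  induction k with
  | zero =>
    intro _
    refine ⟨{q}, fun _ => 0, by simp, by simp, by simp, by simp, ?_⟩
    intro v hv
    rw [Finset.mem_singleton] at hv
    subst hv
    simp
    omega
  | succ k ih =>
    intro hk
    obtain ⟨B, p, hcard, hqB, hinj, hlt, hB⟩ := ih (by omega)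
    have hne : (Bᶜ).Nonempty := by
      rw [← Finset.card_pos, Finset.card_compl]; omega
    obtain ⟨a, haB, ha⟩ := hD Bᶜ hne (by simpa using hqB)
    rw [Finset.mem_compl] at haB
    have hne' : ∀ v ∈ B, v ≠ a := fun v hv h => haB (h ▸ hv)
    let p' : V → ℤ := Function.update p a (k + 1)
    have hpa : p' a = k + 1 := by simp [p']
    have hpB : ∀ v ∈ B, p' v = p v := fun v hv => by simp [p', hne' v hv]
    refine ⟨insert a B, p', by rw [Finset.card_insert_of_notMem haB, hcard], by simp [hqB],
      ?_, ?_, ?_⟩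
    · intro v hv w hw hvw
      simp only [Finset.coe_insert, Set.mem_insert_iff, Finset.mem_coe] at hv hw
      rcases hv with rfl | hv <;> rcases hw with rfl | hw
      · rfl
      · have := hlt w hw
        rw [hpa, hpB w hw] at hvw; omega
      · have := hlt v hv
        rw [hpa, hpB v hv] at hvw; omega
      · rw [hpB v hv, hpB w hw] at hvw
        exact hinj hv hw hvw
    · intro v hv
      rcases Finset.mem_insert.1 hv with rfl | hv
      · rw [hpa]; push_cast; omega
      · have := hlt v hv
        rw [hpB v hv]; push_cast; omega
    · intro v hv
      rcases Finset.mem_insert.1 hv with rfl | hvB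
      · have e : (∑ w, if w ∈ Bᶜ then 0 else (m v w : ℤ)) =
            ∑ w, if w ∈ insert v B ∧ p' w < p' v then (m v w : ℤ) else 0 := by
          refine Finset.sum_congr rfl fun w _ => ?_
          by_cases hw : w ∈ B
          · have : p' w < p' v := by rw [hpa, hpB w hw]; exact hlt w hw
            simp [hw, this]
          · by_cases hwv : w = v
            · subst hwv; simp [hw]
            · simp [hw, hwv]
        rw [e] at ha
        omega
      · refine (hB v hvB).trans (le_of_eq ?_)
        congr 1
        refine Finset.sum_congr rfl fun w _ => ?_
        by_cases hw : w ∈ B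
        · simp [hw, hpB w hw, hpB v hvB]
        · by_cases hwa : w = a
          · subst hwa
            have h1 := hlt v hvB
            have : ¬ (p' w < p' v) := by rw [hpa, hpB v hvB]; omega
            simp [hw, this]
          · simp [hw, hwa]

/-- The order is the burning order of the `q`-reduced divisor equivalent to `D`. That divisor is
negative at `q`, since otherwise it would be effective. -/
lemma exists_orderDiv_sub {V : Type} [Fintype V] [Nonempty V] (m : V → V → ℕ)
    (hsymm : ∀ v w, m v w = m w v) (hloopless : ∀ v, m v v = 0)
    (hconn : ∀ v w : V, Relation.ReflTransGen (fun a b => 0 < m a b) v w) (D : V → ℤ)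
    (hD : ¬ GLinNE m D) :
    ∃ p : V → ℤ, Function.Injective p ∧ GLinNE m (fun v => orderDiv m p v - D v) := by
  obtain ⟨q⟩ := ‹Nonempty V›
  obtain ⟨f, hf0, hf⟩ := exists_reduced m hsymm hloopless hconn q D
  have hq : D q + lap m f q < 0 := by
    by_contra! hq
    refine hD ⟨fun v => D v + lap m f v, fun v => ?_, f, fun v => by simp [lap]⟩
    by_cases hv : v = q
    · rw [hv]; exact hq
    · exact hf0 v hv
  have hpos : 0 < Fintype.card V := Fintype.card_pos_iff.2 ⟨q⟩
  obtain ⟨B, p, hcard, -, hinj, -, hB⟩ :=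
    exists_burning_order m q (fun v => D v + lap m f v) hq hf (Fintype.card V - 1) (by omega)
  have hBu : B = Finset.univ := (Finset.card_eq_iff_eq_univ B).1 (by omega)
  subst hBu
  refine ⟨p, fun v w h => hinj (by simp) (by simp) h, fun v => orderDiv m p v - (D v + lap m f v),
    fun v => ?_, fun v => -1 * f v, fun v => ?_⟩
  · have := hB v (Finset.mem_univ v)
    simp only [Finset.mem_univ, true_and] at this
    simp only [orderDiv]
    linarith
  · change _ = lap m (fun v => -1 * f v) v
    rw [lap_const_mul]; ring

/-! ### Riemann–Roch -/

/-- One half of the Riemann–Roch equality; the other half follows by exchanging `D` and `K - D`. -/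
lemma graph_rank_le {V : Type} [Fintype V] [Nonempty V]
    (m : V → V → ℕ)
    (hsymm : ∀ v w, m v w = m w v)
    (hloopless : ∀ v, m v v = 0)
    (hconn : ∀ v w : V, Relation.ReflTransGen (fun a b => 0 < m a b) v w)
    (numEdges : ℕ) (hE : 2 * numEdges = ∑ v, ∑ w, m v w)
    (K : V → ℤ) (hK : ∀ v, K v = (∑ w, (m v w : ℤ)) - 2)
    (D D' : V → ℤ) (hDD' : ∀ v, D v + D' v = K v) (r r' : ℤ)
    (hr : r ∈ GRankSet m D) (hr' : r' ∈ lowerBounds (GRankSet m D')) :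
    r' ≤ r - (∑ v, D v) + numEdges - Fintype.card V := by
  obtain ⟨E, hE0, hEne, rfl⟩ := hr
  obtain ⟨p, hp, F, hF0, f, hf⟩ := exists_orderDiv_sub m hsymm hloopless hconn _ hEne
  have hdeg : ∑ v, F v = (∑ v, E v) - (∑ v, D v) + numEdges - Fintype.card V := by
    have h1 : ∑ v, (F v - (orderDiv m p v - (D v - E v))) = 0 := by
      rw [← sum_lap m hsymm f]
      exact Finset.sum_congr rfl fun v _ => hf v
    have h2 := sum_orderDiv m hsymm hloopless p hp
    have h3 : 2 * (numEdges : ℤ) = ∑ v, ∑ w, (m v w : ℤ) := by exact_mod_cast hE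
    simp only [Finset.sum_sub_distrib] at h1
    linarith
  have hmem : (∑ v, F v) - 1 ∈ GRankSet m D' := by
    refine ⟨F, hF0, ?_, rfl⟩
    rintro ⟨H, hH0, h, hh⟩
    refine not_linNE_orderDiv m (fun w => - p w)
      ⟨fun v => H v + E v, fun v => add_nonneg (hH0 v) (hE0 v), fun v => h v + -1 * f v, fun v => ?_⟩
    change H v + E v - _ = lap m (fun v => h v + -1 * f v) v
    have h1 : H v - (D' v - F v) = lap m h v := hh v
    have h2 : F v - (orderDiv m p v - (D v - E v)) = lap m f v := hf v
    have h3 := orderDiv_add_neg m hloopless p hp v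
    have h4 := hDD' v
    rw [hK] at h4
    rw [lap_add, lap_const_mul]
    linarith
  have := hr' hmem
  linarith

/-- Riemann-Roch theorem for graphs. -/
theorem riemann_roch_for_graphs {V : Type} [Fintype V] [Nonempty V]
    (m : V → V → ℕ)
    (hsymm : ∀ v w, m v w = m w v)
    (hloopless : ∀ v, m v v = 0)
    (hconn : ∀ v w : V, Relation.ReflTransGen (fun a b => 0 < m a b) v w)
    (numEdges : ℕ) (hE : 2 * numEdges = ∑ v, ∑ w, m v w)
    (g : ℤ) (hg : g = (numEdges : ℤ) - (Fintype.card V : ℤ) + 1)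
    (K : V → ℤ) (hK : ∀ v, K v = (∑ w, (m v w : ℤ)) - 2)
    (D : V → ℤ) (rD rKD : ℤ)
    (hrD : IsLeast (GRankSet m D) rD)
    (hrKD : IsLeast (GRankSet m (fun v => K v - D v)) rKD) :
    rD - rKD = (∑ v, D v) + 1 - g := by
  have h1 := graph_rank_le m hsymm hloopless hconn numEdges hE K hK D (fun v => K v - D v)
    (fun v => by ring) rD rKD hrD.1 hrKD.2
  have h2 := graph_rank_le m hsymm hloopless hconn numEdges hE K hK (fun v => K v - D v) D
    (fun v => by ring) rKD rD hrKD.1 hrD.2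
  have h3 : 2 * (numEdges : ℤ) = ∑ v, ∑ w, (m v w : ℤ) := by exact_mod_cast hE
  have h4 : ∑ v, K v = 2 * numEdges - 2 * Fintype.card V := by
    simp only [hK, Finset.sum_sub_distrib, ← h3]
    simp
    ring
  rw [Finset.sum_sub_distrib, h4] at h2
  linarith
end
end

section
/- Riemann-Roch criterion, sufficiency: In the abstract setting, if the following two properties hold — (RR1): for every D ∈ Div(X) there exists ν ∈ N such that ε(D) + ε(ν − D) = 1; (RR2): for every D ∈ Div(X) with deg(D) = g − 1 one has ε(D) + ε(K − D) = 0 (in ℤ/2ℤ) — then the Riemann-Roch formula r(D) − r(K − D) = deg(D) + 1 − g holds for all D ∈ Div(X). -/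
/-!
Only the inequality `rk (K - D) ≤ rk D - deg D + g - 1` has to be shown: replacing `D` by `K - D`
changes the sign of `deg D + 1 - g`, so the same inequality for `K - D` is the converse one.

For the inequality, choose an effective `E` with `|D - E| = ∅` and `rk D = deg E - 1`. By (RR1) some
non-special `ν` has an effective `F ~ ν - (D - E)`. Then `K - D - F ~ (K - ν) - E`. By (RR2)
`|K - ν| = ∅`, hence also `|K - ν - E| = ∅`, so `F` witnesses
`rk (K - D) ≤ deg F - 1 = g - 1 - deg D + deg E - 1`.
-/

open scoped Classical

noncomputable section

/-- Degree of a divisor (finitely supported `ℤ`-valued function). -/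
def ADeg {X : Type} (D : X →₀ ℤ) : ℤ := D.sum fun _ n => n

/-- A divisor is effective if it is nonnegative everywhere. -/
def AEff {X : Type} (D : X →₀ ℤ) : Prop := ∀ x, 0 ≤ D x

/-- `|D| ≠ ∅`: some effective divisor is `R`-equivalent to `D`. -/
def ALinNE {X : Type} (R : (X →₀ ℤ) → (X →₀ ℤ) → Prop) (D : X →₀ ℤ) : Prop :=
  ∃ E : X →₀ ℤ, AEff E ∧ R E D

/-- The set of numbers `deg E - 1` over effective divisors `E` with `|D - E| = ∅`;
the rank of `D` is the least element of this set. -/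
def ARankSet {X : Type} (R : (X →₀ ℤ) → (X →₀ ℤ) → Prop) (D : X →₀ ℤ) : Set ℤ :=
  {n | ∃ E : X →₀ ℤ, AEff E ∧ ¬ ALinNE R (D - E) ∧ n = ADeg E - 1}

/-- `ε(D) = 0` if `|D| ≠ ∅` and `ε(D) = 1` otherwise. -/
def AEps {X : Type} (R : (X →₀ ℤ) → (X →₀ ℤ) → Prop) (D : X →₀ ℤ) : ZMod 2 :=
  if ALinNE R D then 0 else 1

theorem ADeg_add {X : Type} (D E : X →₀ ℤ) : ADeg (D + E) = ADeg D + ADeg E :=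
  Finsupp.sum_add_index' (fun _ => rfl) (fun _ _ _ => rfl)

theorem ADeg_sub {X : Type} (D E : X →₀ ℤ) : ADeg (D - E) = ADeg D - ADeg E := by
  have h := ADeg_add (D - E) E
  rw [sub_add_cancel] at h
  omega

theorem AEps_eq_one_iff {X : Type} (R : (X →₀ ℤ) → (X →₀ ℤ) → Prop) (D : X →₀ ℤ) :
    AEps R D = 1 ↔ ¬ ALinNE R D := by
  unfold AEps
  split_ifs with h <;> simp [h]

theorem AEps_eq_zero_iff {X : Type} (R : (X →₀ ℤ) → (X →₀ ℤ) → Prop) (D : X →₀ ℤ) :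
    AEps R D = 0 ↔ ALinNE R D := by
  unfold AEps
  split_ifs with h <;> simp [h]

/-- Riemann-Roch criterion, sufficiency. -/
theorem riemann_roch_criterion_sufficiency {X : Type} [Nonempty X]
    (R : (X →₀ ℤ) → (X →₀ ℤ) → Prop)
    (hEquiv : Equivalence R)
    (hE1 : ∀ D D' : X →₀ ℤ, R D D' → ADeg D = ADeg D')
    (hE2 : ∀ D₁ D₁' D₂ D₂' : X →₀ ℤ, R D₁ D₁' → R D₂ D₂' → R (D₁ + D₂) (D₁' + D₂'))
    (g : ℤ) (hg : 0 ≤ g)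
    (K : X →₀ ℤ) (hK : ADeg K = 2 * g - 2)
    (rk : (X →₀ ℤ) → ℤ) (hrk : ∀ D, IsLeast (ARankSet R D) (rk D))
    (hRR1 : ∀ D : X →₀ ℤ, ∃ ν : X →₀ ℤ, ADeg ν = g - 1 ∧ ¬ ALinNE R ν ∧
        AEps R D + AEps R (ν - D) = 1)
    (hRR2 : ∀ D : X →₀ ℤ, ADeg D = g - 1 → AEps R D + AEps R (K - D) = 0) :
    ∀ D : X →₀ ℤ, rk D - rk (K - D) = ADeg D + 1 - g := by
  have key : ∀ D : X →₀ ℤ, rk (K - D) ≤ rk D - ADeg D + g - 1 := by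
    intro D
    obtain ⟨E, hE, hDE, hrE⟩ := (hrk D).1
    obtain ⟨ν, hνdeg, hν, hεν⟩ := hRR1 (D - E)
    rw [(AEps_eq_one_iff R _).2 hDE] at hεν
    obtain ⟨F, hF, hFR⟩ := (AEps_eq_zero_iff R _).1 (add_eq_left.1 hεν)
    have hKν : ¬ ALinNE R (K - ν) := by
      rw [← AEps_eq_zero_iff]
      intro h0
      have h := hRR2 ν hνdeg
      rw [(AEps_eq_one_iff R _).2 hν, h0] at h
      exact absurd h (by decide)
    have hKDF : ¬ ALinNE R (K - D - F) := by
      rintro ⟨G, hG, hGR⟩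
      -- Adding a suitable divisor to both sides of `F ~ ν - (D - E)` gives `K - ν ~ K - D - F + E`.
      have h1 := hE2 _ _ _ _ hFR (hEquiv.refl (K - D - F - (ν - (D - E)) + E))
      have h2 := hE2 _ _ _ _ hGR (hEquiv.refl E)
      refine hKν ⟨G + E, fun x => add_nonneg (hG x) (hE x), ?_⟩
      have e1 : F + (K - D - F - (ν - (D - E)) + E) = K - ν := by abel
      have e2 : (ν - (D - E)) + (K - D - F - (ν - (D - E)) + E) = K - D - F + E := by abel
      rw [e1, e2] at h1
      exact hEquiv.trans h2 (hEquiv.symm h1)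
    have hle := (hrk (K - D)).2 ⟨F, hF, hKDF, rfl⟩
    have hdeg := hE1 _ _ hFR
    rw [ADeg_sub, ADeg_sub] at hdeg
    omega
  intro D
  have h1 := key D
  have h2 := key (K - D)
  rw [sub_sub_cancel, ADeg_sub] at h2
  omega
end
end

section
/- Permutation divisors are non-special: Let G be a finite connected loopless multigraph of genus g = |E| − |V| + 1, and let ≺ be any linear order on the vertex set V. Then deg(ν_≺) = g − 1 and |ν_≺| = ∅, i.e., no effective divisor is equivalent to ν_≺. -/
/-!
For the degree, every edge is counted once in `∑ v, ∑_{w ≺ v} m v w`, namely at its larger end.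

For non-speciality, suppose `ν_≺` plus the principal divisor of `f` is effective. Among the vertices
where `f` is minimal, let `v` be the `≺`-smallest. Every `w ≺ v` has `f w ≥ f v + 1`, and every other
`w` has `f w ≥ f v`, so the principal divisor of `f` is at most `-∑_{w ≺ v} m v w` at `v`. The sum is
then at most `-1` at `v`, a contradiction.
-/

open scoped Classical

noncomputable section

/-- The divisor `ν_≺` associated to a linear order on the vertices:
`ν_≺(v) = (Σ_{w ≺ v} m v w) - 1`. -/
def nuOrd {V : Type} [Fintype V] (m : V → V → ℕ) (L : LinearOrder V) (v : V) : ℤ :=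
  (∑ w ∈ Finset.univ.filter (fun w => L.lt w v), (m v w : ℤ)) - 1

/-- Each edge is counted exactly once, at its larger end. -/
theorem two_mul_sum_lt {V : Type} [Fintype V] (m : V → V → ℕ)
    (hsymm : ∀ v w, m v w = m w v) (hloopless : ∀ v, m v v = 0) (L : LinearOrder V) :
    2 * ∑ v, ∑ w ∈ Finset.univ.filter (fun w => L.lt w v), (m v w : ℤ)
      = ∑ v, ∑ w, (m v w : ℤ) := by
  simp only [Finset.sum_filter]
  have hswap : ∑ v, ∑ w, (if L.lt w v then (m v w : ℤ) else 0)
      = ∑ v, ∑ w, (if L.lt v w then (m v w : ℤ) else 0) := by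
    rw [Finset.sum_comm]
    simp only [hsymm]
  rw [two_mul]
  nth_rewrite 2 [hswap]
  simp only [← Finset.sum_add_distrib]
  refine Finset.sum_congr rfl fun v _ => Finset.sum_congr rfl fun w _ => ?_
  change (if w < v then (m v w : ℤ) else 0) + (if v < w then (m v w : ℤ) else 0) = _
  rcases lt_trichotomy v w with h | h | h
  · simp [h, h.not_gt]
  · subst h
    simp [hloopless]
  · simp [h, h.not_gt]

/-- The `≺`-smallest minimum of `f`. -/
theorem exists_first_min {V : Type} [Fintype V] [Nonempty V] (L : LinearOrder V) (f : V → ℤ) :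
    ∃ v, (∀ w, f v ≤ f w) ∧ ∀ w, L.lt w v → f v < f w := by
  obtain ⟨u, -, hu⟩ := Finset.exists_min_image Finset.univ f Finset.univ_nonempty
  obtain ⟨v, hv, hmin⟩ := Finset.exists_min_image (Finset.univ.filter fun w => f w = f u) id
    ⟨u, by simp⟩
  have hvu : f v = f u := (Finset.mem_filter.mp hv).2
  refine ⟨v, fun w => hvu ▸ hu w (Finset.mem_univ w), fun w hw => ?_⟩
  refine lt_of_le_of_ne (hvu ▸ hu w (Finset.mem_univ w)) fun heq => ?_
  exact absurd hw (not_lt.mpr (hmin w (by simp [← heq, hvu])))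

/-- Permutation divisors are non-special. -/
theorem nu_is_nonspecial {V : Type} [Fintype V] [Nonempty V]
    (m : V → V → ℕ)
    (hsymm : ∀ v w, m v w = m w v)
    (hloopless : ∀ v, m v v = 0)
    (hconn : ∀ v w : V, Relation.ReflTransGen (fun a b => 0 < m a b) v w)
    (numEdges : ℕ) (hE : 2 * numEdges = ∑ v, ∑ w, m v w)
    (g : ℤ) (hg : g = (numEdges : ℤ) - (Fintype.card V : ℤ) + 1)
    (L : LinearOrder V) :
    (∑ v, nuOrd m L v) = g - 1 ∧ ¬ GLinNE m (nuOrd m L) := by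
  constructor
  · have h := two_mul_sum_lt m hsymm hloopless L
    have hE' : 2 * (numEdges : ℤ) = ∑ v, ∑ w, (m v w : ℤ) := by exact_mod_cast hE
    simp only [nuOrd, Finset.sum_sub_distrib, Finset.sum_const, Finset.card_univ, nsmul_eq_mul,
      mul_one]
    linarith
  · rintro ⟨E, hEff, f, hf⟩
    obtain ⟨v, hv, hlt⟩ := exists_first_min L f
    have hE0 := hEff v
    have hfv := hf v
    have hle : ∑ w, (m v w : ℤ) * (f v - f w)
        ≤ -∑ w ∈ Finset.univ.filter (fun w => L.lt w v), (m v w : ℤ) := by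
      rw [Finset.sum_filter, ← Finset.sum_neg_distrib]
      refine Finset.sum_le_sum fun w _ => ?_
      have hm : (0 : ℤ) ≤ m v w := Int.natCast_nonneg _
      split_ifs with h
      · have := hlt w h
        nlinarith
      · have := hv w
        nlinarith
    simp only [nuOrd] at hfv
    linarith
end
end

section
/- Non-special divisors come from permutations: Let G be a finite connected loopless multigraph of genus g = |E| − |V| + 1. If D is a divisor on G with deg(D) = g − 1 and |D| = ∅ (no effective divisor is equivalent to D), then there exists a linear order ≺ on V such that D ~ ν_≺. -/
/-!
Write `Δf v = Σ_w m v w (f v - f w)`. The proof finds a divisor `E = D - Δh` such that every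
nonempty set `S` of vertices contains some `v` with `E v < Σ_{w ∉ S} m v w`; that is, no `S` can be
fired with all its vertices ending out of debt. Burning the graph as in Dhar's algorithm
(start from `S = V` and keep removing such a `v`) then orders the vertices so that `E ≤ ν_≺`
(`exists_rank`). Both divisors have degree `|E(G)| - |V| = g - 1` (`sum_nu`), so they are equal.

To find `E`, minimise the total debt `Σ_v (E v)⁻` over the class of `D`. Since `|D| = ∅`, a minimiser
has a vertex `q` in debt. Divisors of given degree and given debt are finite in number, and
`h` is determined by `Δh` once `h q = 0` because harmonic functions on a connected graph are constant
(`harmonic_const`). Hence among the `h` with `h q = 0`, minimal debt and `q` in debt there is one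
with `Σ_v h v` largest (`exists_unfirable`). If `S` could be fired there, no debt would grow, so by
minimality none would change; in particular `q ∉ S` would still be in debt, and `h + 1_S` would be
admissible with a larger sum.
-/

open scoped Classical

noncomputable section

lemma lap_sub {V : Type} [Fintype V] (m : V → V → ℕ) (f k : V → ℤ) (v : V) :
    lap m (fun x => f x - k x) v = lap m f v - lap m k v := by
  unfold lap
  rw [← Finset.sum_sub_distrib]
  exact Finset.sum_congr rfl fun w _ => by ring

/-- Maximum principle: the set where a harmonic function is maximal is closed under adjacency. -/
lemma harmonic_const {V : Type} [Fintype V] [Nonempty V] (m : V → V → ℕ)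
    (hconn : ∀ v w : V, Relation.ReflTransGen (fun a b => 0 < m a b) v w)
    (k : V → ℤ) (hk : ∀ v, lap m k v = 0) (v w : V) : k v = k w := by
  obtain ⟨x, hx⟩ := Finite.exists_max k
  have key : ∀ y, k y = k x := by
    intro y
    induction hconn x y with
    | refl => rfl
    | @tail a b _ hab ih =>
      have h0 := hk a
      unfold lap at h0
      rw [Finset.sum_eq_zero_iff_of_nonneg] at h0
      · have hb := h0 b (Finset.mem_univ b)
        rcases mul_eq_zero.1 hb with hb | hb
        · have : m a b = 0 := by exact_mod_cast hb
          omega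
        · linarith
      · intro c _
        have := hx c
        exact mul_nonneg (by positivity) (by linarith)
  rw [key v, key w]

/-- Effect of firing `S`: vertices of `S` pay their edges leaving `S`, the others never lose. -/
lemma lap_indicator {V : Type} [Fintype V] (m : V → V → ℕ) (S : Finset V) (v : V) :
    (v ∈ S → lap m (fun x => if x ∈ S then 1 else 0) v = ∑ w with w ∉ S, (m v w : ℤ)) ∧
    (v ∉ S → lap m (fun x => if x ∈ S then 1 else 0) v ≤ 0) := by
  unfold lap
  constructor
  · intro hv
    rw [Finset.sum_filter]
    refine Finset.sum_congr rfl fun w _ => ?_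
    by_cases hw : w ∈ S <;> simp [hv, hw]
  · intro hv
    refine Finset.sum_nonpos fun w _ => ?_
    by_cases hw : w ∈ S <;> simp [hv, hw]

/-- Finitely many `h` are normalised by `h q = 0` and have total debt of `D - lap m h` equal
to `N`. -/
lemma finite_debt {V : Type} [Fintype V] [Nonempty V] (m : V → V → ℕ)
    (hsymm : ∀ v w, m v w = m w v)
    (hconn : ∀ v w : V, Relation.ReflTransGen (fun a b => 0 < m a b) v w)
    (D : V → ℤ) (q : V) (N : ℕ) :
    {h : V → ℤ | h q = 0 ∧ ∑ v, (-(D v - lap m h v)).toNat = N}.Finite := by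
  have hfin : (Set.Icc (fun _ : V => -(N : ℤ))
      (fun _ => ∑ v, D v + (Fintype.card V : ℤ) * N)).Finite := Set.finite_Icc _ _
  refine Set.Finite.of_finite_image (f := fun h v => D v - lap m h v) (hfin.subset ?_) ?_
  · rintro _ ⟨h, ⟨-, hN⟩, rfl⟩
    have hlow : ∀ v, -(N : ℤ) ≤ D v - lap m h v := by
      intro v
      have := Finset.single_le_sum (f := fun v => (-(D v - lap m h v)).toNat)
        (fun _ _ => Nat.zero_le _) (Finset.mem_univ v)
      omega
    refine ⟨hlow, fun v => ?_⟩
    have hs : ∑ v, (D v - lap m h v + N) = ∑ v, D v + (Fintype.card V : ℤ) * N := by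
      simp [Finset.sum_add_distrib, Finset.sum_sub_distrib, sum_lap m hsymm]
    have := Finset.single_le_sum (f := fun v => D v - lap m h v + N)
      (fun v _ => by have := hlow v; linarith) (Finset.mem_univ v)
    simp only at this ⊢
    linarith
  · rintro h ⟨hq, -⟩ k ⟨kq, -⟩ hhk
    have hc := harmonic_const m hconn (fun x => h x - k x) (fun v => by
      have := congrFun hhk v
      simp only at this
      rw [lap_sub]; linarith)
    funext v
    have := hc v q
    linarith

/-- If `|D| = ∅`, some divisor equivalent to `D` admits no nonempty set of vertices that can be
fired with all of its members ending out of debt. -/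
lemma exists_unfirable {V : Type} [Fintype V] [Nonempty V] (m : V → V → ℕ)
    (hsymm : ∀ v w, m v w = m w v)
    (hconn : ∀ v w : V, Relation.ReflTransGen (fun a b => 0 < m a b) v w)
    (D : V → ℤ) (hempty : ¬ GLinNE m D) :
    ∃ h : V → ℤ, ∀ S : Finset V, S.Nonempty →
      ∃ v ∈ S, D v - lap m h v < ∑ w with w ∉ S, (m v w : ℤ) := by
  let debt : (V → ℤ) → ℕ := fun h => ∑ v, (-(D v - lap m h v)).toNat
  obtain ⟨f, hf⟩ : ∃ f, ∀ k, debt f ≤ debt k :=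
    ⟨Function.argmin debt, fun k => Function.argmin_le debt k⟩
  obtain ⟨q, hq⟩ : ∃ q, D q - lap m f q < 0 := by
    by_contra! hcon
    refine hempty ⟨fun v => D v - lap m f v, hcon, fun v => - f v, fun v => ?_⟩
    have h0 : lap m f v = ∑ w, (m v w : ℤ) * (f v - f w) := rfl
    simp only [h0, sub_sub_cancel_left, ← Finset.sum_neg_distrib]
    exact Finset.sum_congr rfl fun w _ => by ring
  let F : Set (V → ℤ) := {h | (h q = 0 ∧ debt h = debt f) ∧ D q - lap m h q < 0}
  have hF : F.Finite := (finite_debt m hsymm hconn D q (debt f)).subset fun h hh => hh.1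
  -- Subtracting the constant `f q` leaves the principal divisor unchanged.
  have hne : F.Nonempty := by
    have hl : ∀ v, lap m (fun x => f x - f q) v = lap m f v := fun v => by simp [lap]
    exact ⟨fun x => f x - f q, ⟨by simp, by simp only [debt, hl]⟩, by rw [hl]; exact hq⟩
  obtain ⟨h, ⟨⟨hhq, hhN⟩, hhneg⟩, hmax⟩ := hF.exists_maximalFor (fun h => ∑ v, h v) F hne
  refine ⟨h, ?_⟩
  by_contra! hcon
  obtain ⟨S, hSne, hS⟩ := hcon
  have hqS : q ∉ S := fun hqS => by
    have h1 := hS q hqS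
    have h2 : (0 : ℤ) ≤ ∑ w with w ∉ S, (m q w : ℤ) := Finset.sum_nonneg fun _ _ => by positivity
    linarith
  let i : V → ℤ := fun x => if x ∈ S then 1 else 0
  let h' : V → ℤ := fun x => h x - (- i x)
  have hlap : ∀ v, lap m h' v = lap m h v + lap m i v := by
    intro v
    simp only [h', lap, ← Finset.sum_add_distrib]
    exact Finset.sum_congr rfl fun w _ => by ring
  have hle : ∀ v, (-(D v - lap m h' v)).toNat ≤ (-(D v - lap m h v)).toNat := by
    intro v
    have hL := hlap v
    by_cases hv : v ∈ S
    · have h1 := (lap_indicator m S v).1 hv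
      have h2 := hS v hv
      have h3 : lap m i v = ∑ w with w ∉ S, (m v w : ℤ) := h1
      omega
    · have h1 : lap m i v ≤ 0 := (lap_indicator m S v).2 hv
      omega
  have hdebt : debt h' = debt h :=
    le_antisymm (Finset.sum_le_sum fun v _ => hle v) (hhN ▸ hf h')
  have hpt := (Finset.sum_eq_sum_iff_of_le fun v _ => hle v).1 hdebt q (Finset.mem_univ q)
  have hmem : h' ∈ F :=
    ⟨⟨by simp [h', i, hhq, hqS], hdebt.trans hhN⟩, by omega⟩
  have hsum : ∑ v, h' v = ∑ v, h v + (S.card : ℤ) := by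
    simp [h', i, Finset.sum_add_distrib]
  have hcard : 0 < (S.card : ℤ) := by exact_mod_cast hSne.card_pos
  have hlt : ∑ v, h v ≤ ∑ v, h' v := by linarith
  have := hmax hmem hlt
  simp only at this
  linarith

/-- Dhar's burning algorithm: when the complement of `S` has burnt, the vertices of `S` burn in the
order of increasing `r`, each having fewer chips than edges towards what has burnt before it. -/
lemma exists_rank {V : Type} [Fintype V] (m : V → V → ℕ) (E : V → ℤ)
    (hE : ∀ S : Finset V, S.Nonempty → ∃ v ∈ S, E v < ∑ w with w ∉ S, (m v w : ℤ))
    (S : Finset V) : ∃ r : V → ℕ, Set.InjOn r S ∧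
      ∀ v ∈ S, E v < ∑ w with (w ∉ S ∨ r w < r v), (m v w : ℤ) := by
  induction S using Finset.strongInduction with
  | H S ih =>
    rcases S.eq_empty_or_nonempty with rfl | hne
    · exact ⟨fun _ => 0, by simp, by simp⟩
    obtain ⟨v, hv, hlt⟩ := hE S hne
    obtain ⟨r, hinj, hr⟩ := ih (S.erase v) (Finset.erase_ssubset hv)
    refine ⟨fun x => if x = v then 0 else r x + 1, ?_, ?_⟩
    · intro x hx y hy hxy
      by_cases hxv : x = v <;> by_cases hyv : y = v <;>
        simp only [hxv, hyv, if_true, if_false] at hxy ⊢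
      · omega
      · omega
      · exact hinj (by simpa [hxv] using hx) (by simpa [hyv] using hy) (by omega)
    · intro x hx
      by_cases hxv : x = v
      · subst hxv
        refine hlt.trans_le (Finset.sum_le_sum_of_subset_of_nonneg ?_ fun _ _ _ => by positivity)
        intro w
        simp only [Finset.mem_filter, Finset.mem_univ, true_and]
        exact Or.inl
      · refine (hr x (by simp [hxv, hx])).trans_le
          (Finset.sum_le_sum_of_subset_of_nonneg ?_ fun _ _ _ => by positivity)
        intro w
        simp only [Finset.mem_filter, Finset.mem_univ, true_and, Finset.mem_erase, hxv, if_false]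
        by_cases hwv : w = v
        · simp [hwv]
        · simp [hwv]

/-- Each edge is counted once, at its larger endpoint, so `ν_≺` has degree `|E(G)| - |V|`. -/
lemma sum_nu {V : Type} [Fintype V] (m : V → V → ℕ) (hsymm : ∀ v w, m v w = m w v)
    (hloopless : ∀ v, m v v = 0) (numEdges : ℕ) (hE : 2 * numEdges = ∑ v, ∑ w, m v w)
    (L : LinearOrder V) : ∑ v, nuOrd m L v = (numEdges : ℤ) - Fintype.card V := by
  have h1 : ∑ v, nuOrd m L v
      = (∑ v, ∑ w, if L.lt w v then (m v w : ℤ) else 0) - Fintype.card V := by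
    simp [nuOrd, Finset.sum_sub_distrib, Finset.sum_filter]
  have h2 : ∑ v, ∑ w, (if L.lt w v then (m v w : ℤ) else 0)
      = ∑ v, ∑ w, if L.lt v w then (m v w : ℤ) else 0 := by
    rw [Finset.sum_comm]
    simp only [hsymm]
  have h3 : ∑ v, ∑ w, (m v w : ℤ) = (∑ v, ∑ w, if L.lt w v then (m v w : ℤ) else 0)
      + ∑ v, ∑ w, if L.lt v w then (m v w : ℤ) else 0 := by
    simp only [← Finset.sum_add_distrib]
    refine Finset.sum_congr rfl fun v _ => Finset.sum_congr rfl fun w _ => ?_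
    rcases lt_trichotomy v w with h | h | h
    · have h' : ¬ L.lt w v := not_lt_of_gt h
      rw [if_neg h', if_pos h, zero_add]
    · subst h
      simp [hloopless]
    · have h' : ¬ L.lt v w := not_lt_of_gt h
      rw [if_neg h', if_pos h, add_zero]
  have h4 : (2 * numEdges : ℤ) = ∑ v, ∑ w, (m v w : ℤ) := by exact_mod_cast hE
  linarith

/-- Non-special divisors come from permutations. -/
theorem nonspecial_equiv_nu {V : Type} [Fintype V] [Nonempty V]
    (m : V → V → ℕ)
    (hsymm : ∀ v w, m v w = m w v)
    (hloopless : ∀ v, m v v = 0)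
    (hconn : ∀ v w : V, Relation.ReflTransGen (fun a b => 0 < m a b) v w)
    (numEdges : ℕ) (hE : 2 * numEdges = ∑ v, ∑ w, m v w)
    (g : ℤ) (hg : g = (numEdges : ℤ) - (Fintype.card V : ℤ) + 1)
    (D : V → ℤ) (hdeg : (∑ v, D v) = g - 1) (hempty : ¬ GLinNE m D) :
    ∃ L : LinearOrder V, GEquiv m D (nuOrd m L) := by
  obtain ⟨h, hh⟩ := exists_unfirable m hsymm hconn D hempty
  obtain ⟨r, hinj, hr⟩ := exists_rank m (fun v => D v - lap m h v) hh Finset.univ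
  have hinj' : Function.Injective r := fun x y hxy => hinj (by simp) (by simp) hxy
  let L : LinearOrder V := LinearOrder.lift' r hinj'
  have hle : ∀ v ∈ Finset.univ, D v - lap m h v ≤ nuOrd m L v := by
    intro v hv
    have h1 : D v - lap m h v < nuOrd m L v + 1 := by
      refine (hr v hv).trans_eq ?_
      unfold nuOrd
      rw [sub_add_cancel]
      refine Finset.sum_congr ?_ fun _ _ => rfl
      ext w
      simp only [Finset.mem_filter, Finset.mem_univ, true_and, not_true_eq_false, false_or]
      exact Iff.rfl
    linarith
  have hsum : ∑ v, (D v - lap m h v) = ∑ v, nuOrd m L v := by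
    rw [sum_nu m hsymm hloopless numEdges hE, Finset.sum_sub_distrib, sum_lap m hsymm, hdeg, hg]
    ring
  have heq := (Finset.sum_eq_sum_iff_of_le hle).1 hsum
  refine ⟨L, h, fun v => ?_⟩
  have := heq v (Finset.mem_univ v)
  have h0 : lap m h v = ∑ w, (m v w : ℤ) * (h v - h w) := rfl
  rw [← h0]
  linarith
end
end
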